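/- Assume a_{ij}(ω) ≥ 0 for all i ≠ j and all ω ∈ Ω, and assume there is a measurable function δ̃ : Ω → (0, ∞) such that for every ω ∈ Ω and all i ≠ j one has a_{ij}(θ_t ω) ≥ δ̃(ω) for Lebesgue-a.e. t ∈ [0, 1]. Let u_{ji}(ω) := (U_ω(1)e_i)_j denote the (j,i)-entry of the time-one solution matrix, where e_i is the i-th standard basis vector. Then for every ω ∈ Ω and all i, j ∈ {1,…,N}: (i) u_{ii}(ω) ≥ exp(ã_{ii}(ω)); (ii) for j ≠ i, u_{ji}(ω) ≥ exp( ã_{ii}(ω) + ā_{jj}(ω) )·δ̃(ω); (iii) u_{ji}(ω) ≤ exp( ∫₀¹ Σ_{l=1}^{N} max_{1≤k≤N} a_{lk}(θ_τ ω) dτ ). Here ã_{ii}(ω) := min_{0≤t≤1} ∫₀ᵗ a_{ii}(θ_τ ω) dτ and ā_{jj}(ω) := min_{0≤s≤1} ∫_s¹ a_{jj}(θ_τ ω) dτ. -/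

import Mathlib

open MeasureTheory Matrix Filter

/-- The Euclidean norm on `Fin N → ℝ`. -/
noncomputable def enorm' {N : ℕ} (u : Fin N → ℝ) : ℝ := Real.sqrt (∑ i, (u i) ^ 2)

/-- The operator norm of a matrix with respect to the Euclidean norm. -/
noncomputable def eopNorm {N : ℕ} (M : Matrix (Fin N) (Fin N) ℝ) : ℝ :=
  sSup {c : ℝ | ∃ u : Fin N → ℝ, enorm' u ≤ 1 ∧ c = enorm' (M.mulVec u)}

/-!
The integrating factors `exp (-∫ₐᵗ bᵢᵢ)` turn a cooperative system `u' = B u` into a system with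
vanishing diagonal and nonnegative coefficients. There the negative parts of the coordinates satisfy
the integral inequality of Grönwall's lemma, so they vanish and solutions stay nonnegative. Hence
every transformed coordinate dominates its initial value, which is the diagonal bound; keeping the
single term `bⱼᵢ uᵢ` of the integral equation of the `j`-th coordinate, with the diagonal bound
inserted for `uᵢ`, gives the off-diagonal one. For the upper bound, the sum of the nonnegative
coordinates grows at rate at most `∑ₗ maxₖ bₗₖ`. Coefficients are only integrable, so scalar
comparison rests on integration by parts for absolutely continuous functions.
-/

/-! ### Scalar comparison with integrable coefficients -/

theorem absolutelyContinuousOnInterval_comp_of_lipschitzOnWith {X Y : Type*} [PseudoMetricSpace X]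
    [PseudoMetricSpace Y] {f : ℝ → X} {g : X → Y} {s : Set X} {K : NNReal} {a b : ℝ}
    (hg : LipschitzOnWith K g s) (hf : AbsolutelyContinuousOnInterval f a b)
    (hfs : Set.MapsTo f (Set.uIcc a b) s) :
    AbsolutelyContinuousOnInterval (fun t => g (f t)) a b := by
  have hbound : Tendsto (fun E : ℕ × (ℕ → ℝ × ℝ) =>
      K * ∑ i ∈ Finset.range E.1, dist (f (E.2 i).1) (f (E.2 i).2))
      (AbsolutelyContinuousOnInterval.totalLengthFilter ⊓
        𝓟 (AbsolutelyContinuousOnInterval.disjWithin a b)) (nhds 0) := by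
    simpa only [mul_zero] using Tendsto.const_mul (K : ℝ) hf
  refine squeeze_zero' (Eventually.of_forall fun E => Finset.sum_nonneg fun _ _ => dist_nonneg)
    ?_ hbound
  filter_upwards [mem_inf_of_right (mem_principal_self _)] with E ⟨hmem, _⟩
  rw [Finset.mul_sum]
  exact Finset.sum_le_sum fun i hi =>
    hg.dist_le_mul _ (hfs (hmem i hi).1) _ (hfs (hmem i hi).2)

theorem absolutelyContinuousOnInterval_exp {g : ℝ → ℝ} {a b : ℝ}
    (hg : AbsolutelyContinuousOnInterval g a b) :
    AbsolutelyContinuousOnInterval (fun t => Real.exp (g t)) a b := by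
  obtain ⟨C, hC⟩ := hg.exists_bound
  obtain ⟨K, hK⟩ := (Real.contDiff_exp (n := 1)).contDiffOn.exists_lipschitzOnWith one_ne_zero
    (convex_Icc (-C) C) isCompact_Icc
  exact absolutelyContinuousOnInterval_comp_of_lipschitzOnWith hK hg
    fun t ht => abs_le.1 (hC t ht)

section Scalar

variable {f α x : ℝ → ℝ} {x₀ a b : ℝ}

theorem intervalIntegrable_of_mem_Icc (hf : IntervalIntegrable f volume a b) {t : ℝ}
    (ht : t ∈ Set.Icc a b) : IntervalIntegrable f volume a t :=
  hf.mono_set (Set.uIcc_subset_uIcc_left (Set.Icc_subset_uIcc ht))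

theorem intervalIntegrable_finsetSum {ι : Type*} {s : Finset ι} {f : ι → ℝ → ℝ}
    (hf : ∀ i ∈ s, IntervalIntegrable (f i) volume a b) :
    IntervalIntegrable (fun t => ∑ i ∈ s, f i t) volume a b := by
  simpa only [Finset.sum_fn] using IntervalIntegrable.sum s hf

theorem intervalIntegrable_ciSup {ι : Type*} [Finite ι] {f : ι → ℝ → ℝ}
    (hf : ∀ i, IntervalIntegrable (f i) volume a b) :
    IntervalIntegrable (fun t => ⨆ i, f i t) volume a b := by
  have := Fintype.ofFinite ι
  have hmeas : AEStronglyMeasurable (fun t => ⨆ i, f i t) (volume.restrict (Set.uIoc a b)) :=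
    (AEMeasurable.iSup fun i => (hf i).aestronglyMeasurable_restrict_uIoc.aemeasurable)
      |>.aestronglyMeasurable
  refine (intervalIntegrable_finsetSum fun i (_ : i ∈ Finset.univ) => (hf i).abs).mono_fun
    hmeas (Eventually.of_forall fun t => ?_)
  have habs_le (i : ι) : |f i t| ≤ ∑ j, |f j t| :=
    Finset.single_le_sum (f := fun j => |f j t|) (fun _ _ => abs_nonneg _) (Finset.mem_univ i)
  refine le_trans ?_ (Real.le_norm_self _)
  cases isEmpty_or_nonempty ι with
  | inl _ => simp
  | inr h =>
    obtain ⟨i⟩ := id h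
    refine abs_le.2 ⟨?_, ciSup_le fun j => (le_abs_self _).trans (habs_le j)⟩
    exact (abs_le.1 (habs_le i)).1.trans
      (le_ciSup (f := fun j => f j t) (Set.finite_range _).bddAbove i)

theorem continuousOn_exp_neg_integral (hα : IntervalIntegrable α volume a b) :
    ContinuousOn (fun t => Real.exp (-∫ s in a..t, α s)) (Set.uIcc a b) :=
  (intervalIntegral.continuousOn_primitive_interval' hα Set.left_mem_uIcc).neg.rexp

theorem mul_exp_neg_integral_eq (hf : IntervalIntegrable f volume a b)
    (hα : IntervalIntegrable α volume a b)
    (hx : ∀ t ∈ Set.uIcc a b, x t = x₀ + ∫ s in a..t, f s) :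
    x b * Real.exp (-∫ s in a..b, α s) =
      x₀ + ∫ s in a..b, (f s - α s * x s) * Real.exp (-∫ r in a..s, α r) := by
  let y : ℝ → ℝ := fun t => x₀ + ∫ s in a..t, f s
  let e : ℝ → ℝ := fun t => Real.exp (-∫ s in a..t, α s)
  have hy : AbsolutelyContinuousOnInterval y a b :=
    ((LipschitzWith.const x₀).lipschitzOnWith.absolutelyContinuousOnInterval).add
      (hf.absolutelyContinuousOnInterval_intervalIntegral Set.left_mem_uIcc)
  have he : AbsolutelyContinuousOnInterval e a b := absolutelyContinuousOnInterval_exp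
    (hα.absolutelyContinuousOnInterval_intervalIntegral Set.left_mem_uIcc).neg
  have hparts : (∫ s in a..b, deriv y s * e s + y s * deriv e s) = y b * e b - x₀ := by
    rw [hy.integral_deriv_mul_eq_sub he]
    simp [y, e]
  rw [hx b Set.right_mem_uIcc, ← sub_eq_iff_eq_add', ← hparts]
  refine intervalIntegral.integral_congr_ae ?_
  filter_upwards [hf.ae_hasDerivAt_integral, hα.ae_hasDerivAt_integral] with s hfs hαs hs
  have hs' : s ∈ Set.uIcc a b := Set.uIoc_subset_uIcc hs
  have hy' : HasDerivAt y (f s) s := (hfs hs' a Set.left_mem_uIcc).const_add _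
  have he' : HasDerivAt e (e s * -α s) s := (hαs hs' a Set.left_mem_uIcc).neg.exp
  rw [hy'.deriv, he'.deriv, hx s hs']
  ring

theorem le_mul_exp_integral_of_ae_le (hab : a ≤ b) (hf : IntervalIntegrable f volume a b)
    (hα : IntervalIntegrable α volume a b)
    (hx : ∀ t ∈ Set.Icc a b, x t = x₀ + ∫ s in a..t, f s)
    (hle : ∀ᵐ s ∂volume.restrict (Set.Icc a b), f s ≤ α s * x s) :
    x b ≤ x₀ * Real.exp (∫ s in a..b, α s) := by
  have hdefect : 0 ≤ ∫ s in a..b, -((f s - α s * x s) * Real.exp (-∫ r in a..s, α r)) := by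
    refine intervalIntegral.integral_nonneg_of_ae_restrict hab ?_
    filter_upwards [hle] with s hs
    exact neg_nonneg.2 (mul_nonpos_of_nonpos_of_nonneg (sub_nonpos.2 hs) (Real.exp_pos _).le)
  rw [intervalIntegral.integral_neg] at hdefect
  have hdecay : x b * Real.exp (-∫ s in a..b, α s) ≤ x₀ := by
    rw [mul_exp_neg_integral_eq hf hα (by rwa [Set.uIcc_of_le hab])]
    linarith
  rwa [Real.exp_neg, ← div_eq_mul_inv, div_le_iff₀ (Real.exp_pos _)] at hdecay

theorem nonpos_of_le_integral_mul (hab : a ≤ b) (hα : IntervalIntegrable α volume a b)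
    (hα₀ : ∀ᵐ s ∂volume.restrict (Set.Icc a b), 0 ≤ α s) (hx : ContinuousOn x (Set.Icc a b))
    (hle : ∀ t ∈ Set.Icc a b, x t ≤ ∫ s in a..t, α s * x s) : x b ≤ 0 := by
  have hαx : IntervalIntegrable (fun s => α s * x s) volume a b :=
    hα.mul_continuousOn (by rwa [Set.uIcc_of_le hab])
  have hprim : ∫ s in a..b, α s * x s ≤ 0 * Real.exp (∫ s in a..b, α s) := by
    refine le_mul_exp_integral_of_ae_le hab hαx hα (fun t _ => (zero_add _).symm) ?_
    filter_upwards [hα₀, ae_restrict_mem measurableSet_Icc] with s hαs hs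
    exact mul_le_mul_of_nonneg_left (hle s hs) hαs
  rw [zero_mul] at hprim
  exact (hle b (Set.right_mem_Icc.2 hab)).trans hprim

theorem iInf_integral_left_le (hα : IntervalIntegrable α volume a b) {t : ℝ}
    (ht : t ∈ Set.Icc a b) :
    (⨅ t : Set.Icc a b, ∫ s in a..(t : ℝ), α s) ≤ ∫ s in a..t, α s :=
  ciInf_set_le (isCompact_Icc.bddBelow_image
    ((intervalIntegral.continuousOn_primitive_interval' hα Set.left_mem_uIcc).mono
      Set.Icc_subset_uIcc)) ht

theorem continuousOn_integral_left (hα : IntervalIntegrable α volume a b) :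
    ContinuousOn (fun t => ∫ s in t..b, α s) (Set.uIcc a b) := by
  simp only [intervalIntegral.integral_symm b]
  exact (intervalIntegral.continuousOn_primitive_interval' hα Set.right_mem_uIcc).neg

theorem iInf_integral_right_le (hα : IntervalIntegrable α volume a b) {t : ℝ}
    (ht : t ∈ Set.Icc a b) :
    (⨅ t : Set.Icc a b, ∫ s in (t : ℝ)..b, α s) ≤ ∫ s in t..b, α s :=
  ciInf_set_le (isCompact_Icc.bddBelow_image
    ((continuousOn_integral_left hα).mono Set.Icc_subset_uIcc)) ht

end Scalar

/-! ### Cooperative linear systems -/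

/-- `u` is a Carathéodory solution on `[a, b]` of `u' = B(t) u`, `u(a) = u₀`. The integral equation
is imposed coordinatewise, which keeps the definition free of a norm on `n → ℝ`. -/
structure IsCaratheodorySolution {n : Type*} [Fintype n] (B : ℝ → Matrix n n ℝ) (u₀ : n → ℝ)
    (a b : ℝ) (u : ℝ → n → ℝ) : Prop where
  continuousOn : ContinuousOn u (Set.Icc a b)
  eq_add_integral : ∀ t ∈ Set.Icc a b, ∀ i, u t i = u₀ i + ∫ s in a..t, (B s *ᵥ u s) i

section RemoveDiagonal

variable {n : Type*} [DecidableEq n] {B : ℝ → Matrix n n ℝ} {a b : ℝ}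

/-- The coefficient matrix of the system solved by `vᵢ(t) = exp (-∫ₐᵗ bᵢᵢ) uᵢ(t)` when `u' = B u`:
the diagonal of `B` disappears, and its off-diagonal entries are conjugated by the diagonal matrix
with entries `exp (∫ₐᵗ bᵢᵢ)`. It turns a cooperative system into one with nonnegative entries. -/
noncomputable def removeDiagonal (B : ℝ → Matrix n n ℝ) (a t : ℝ) :
    Matrix n n ℝ :=
  Matrix.of fun i j => if i = j then 0 else
    B t i j * (Real.exp (∫ s in a..t, B s j j) * Real.exp (-∫ s in a..t, B s i i))

theorem intervalIntegrable_removeDiagonal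
    (hB : ∀ i j, IntervalIntegrable (fun t => B t i j) volume a b) (i j : n) :
    IntervalIntegrable (fun t => removeDiagonal B a t i j) volume a b := by
  by_cases hij : i = j
  · simp [removeDiagonal, hij]
  · simp only [removeDiagonal, of_apply, if_neg hij]
    exact (hB i j).mul_continuousOn
      ((intervalIntegral.continuousOn_primitive_interval' (hB j j) Set.left_mem_uIcc).rexp.mul
        (continuousOn_exp_neg_integral (hB i i)))

theorem removeDiagonal_nonneg {t : ℝ} (hB₀ : ∀ i j, i ≠ j → 0 ≤ B t i j) (i j : n) :
    0 ≤ removeDiagonal B a t i j := by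
  by_cases hij : i = j
  · simp [removeDiagonal, hij]
  · simp only [removeDiagonal, of_apply, if_neg hij]
    have := hB₀ i j hij
    positivity

end RemoveDiagonal

section System

variable {n : Type*} [Fintype n] {B : ℝ → Matrix n n ℝ} {u : ℝ → n → ℝ} {u₀ : n → ℝ} {a b : ℝ}

theorem intervalIntegrable_mulVec_apply
    (hB : ∀ i j, IntervalIntegrable (fun t => B t i j) volume a b)
    (hu : ContinuousOn u (Set.uIcc a b)) (i : n) :
    IntervalIntegrable (fun t => (B t *ᵥ u t) i) volume a b :=
  intervalIntegrable_finsetSum fun j _ => (hB i j).mul_continuousOn (continuousOn_pi.1 hu j)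

theorem sum_mulVec_le_sum_iSup_mul_sum (M : Matrix n n ℝ) {x : n → ℝ} (hx : 0 ≤ x) :
    ∑ i, (M *ᵥ x) i ≤ (∑ i, ⨆ k, M i k) * ∑ k, x k := by
  rw [Finset.sum_mul]
  refine Finset.sum_le_sum fun i _ => ?_
  rw [Finset.mul_sum]
  exact Finset.sum_le_sum fun k _ =>
    mul_le_mul_of_nonneg_right (le_ciSup (Set.finite_range (M i)).bddAbove k) (hx k)

theorem mul_apply_le_mulVec_of_nonneg {M : Matrix n n ℝ} (hM : ∀ i j, 0 ≤ M i j) {x : n → ℝ}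
    (hx : 0 ≤ x) (i j : n) : M i j * x j ≤ (M *ᵥ x) i :=
  Finset.single_le_sum (f := fun k => M i k * x k) (fun k _ => mul_nonneg (hM i k) (hx k))
    (Finset.mem_univ j)

theorem mulVec_mono_of_nonneg {M : Matrix n n ℝ} (hM : ∀ i j, 0 ≤ M i j) {x y : n → ℝ}
    (hxy : x ≤ y) : M *ᵥ x ≤ M *ᵥ y :=
  fun i => Finset.sum_le_sum fun j _ => mul_le_mul_of_nonneg_left (hxy j) (hM i j)

theorem isCaratheodorySolution_of_eq_add_integral
    (hB : ∀ i j, IntervalIntegrable (fun t => B t i j) volume a b)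
    (hcont : ContinuousOn u (Set.Icc a b))
    (heq : ∀ t ∈ Set.Icc a b, u t = u₀ + ∫ s in a..t, B s *ᵥ u s) :
    IsCaratheodorySolution B u₀ a b u where
  continuousOn := hcont
  eq_add_integral t ht i := by
    have hint (i : n) : IntervalIntegrable (fun s => (B s *ᵥ u s) i) volume a t :=
      intervalIntegrable_mulVec_apply
        (fun i j => intervalIntegrable_of_mem_Icc (hB i j) ht)
        (hcont.mono (by rw [Set.uIcc_of_le ht.1]; exact Set.Icc_subset_Icc_right ht.2)) i
    rw [heq t ht, Pi.add_apply, intervalIntegral.integral_of_le ht.1,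
      eval_integral fun i => (hint i).1, intervalIntegral.integral_of_le ht.1]

namespace IsCaratheodorySolution

theorem mono_right (h : IsCaratheodorySolution B u₀ a b u) {c : ℝ} (hcb : c ≤ b) :
    IsCaratheodorySolution B u₀ a c u where
  continuousOn := h.continuousOn.mono (Set.Icc_subset_Icc_right hcb)
  eq_add_integral t ht := h.eq_add_integral t (Set.Icc_subset_Icc_right hcb ht)

theorem intervalIntegrable_mulVec (h : IsCaratheodorySolution B u₀ a b u) (hab : a ≤ b)
    (hB : ∀ i j, IntervalIntegrable (fun t => B t i j) volume a b) (i : n) :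
    IntervalIntegrable (fun t => (B t *ᵥ u t) i) volume a b :=
  intervalIntegrable_mulVec_apply hB (by rw [Set.uIcc_of_le hab]; exact h.continuousOn) i

theorem sum_eq_add_integral (h : IsCaratheodorySolution B u₀ a b u) (hab : a ≤ b)
    (hB : ∀ i j, IntervalIntegrable (fun t => B t i j) volume a b) :
    ∑ i, u b i = ∑ i, u₀ i + ∫ s in a..b, ∑ i, (B s *ᵥ u s) i := by
  rw [intervalIntegral.integral_finsetSum fun i _ => h.intervalIntegrable_mulVec hab hB i,
    ← Finset.sum_add_distrib]
  exact Finset.sum_congr rfl fun i _ => h.eq_add_integral b (Set.right_mem_Icc.2 hab) i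

theorem continuousOn_negPart (h : IsCaratheodorySolution B u₀ a b u) :
    ContinuousOn (fun t => (u t)⁻) (Set.Icc a b) :=
  continuousOn_pi.2 fun k =>
    continuous_negPart.comp_continuousOn (continuousOn_pi.1 h.continuousOn k)

theorem negPart_apply_le_integral (h : IsCaratheodorySolution B u₀ a b u) (hab : a ≤ b)
    (hB : ∀ i j, IntervalIntegrable (fun t => B t i j) volume a b)
    (hB₀ : ∀ᵐ t ∂volume.restrict (Set.Icc a b), ∀ i j, 0 ≤ B t i j) (hu₀ : 0 ≤ u₀) (i : n) :
    (u b)⁻ i ≤ ∫ s in a..b, (B s *ᵥ (u s)⁻) i := by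
  have hneg : ContinuousOn (fun t => (u t)⁻) (Set.uIcc a b) := by
    rw [Set.uIcc_of_le hab]
    exact h.continuousOn_negPart
  refine sup_le ?_ (intervalIntegral.integral_nonneg_of_ae_restrict hab ?_)
  · calc -u b i ≤ ∫ s in a..b, -(B s *ᵥ u s) i := by
          rw [h.eq_add_integral b (Set.right_mem_Icc.2 hab), intervalIntegral.integral_neg]
          have hu₀i : 0 ≤ u₀ i := hu₀ i
          linarith
      _ ≤ ∫ s in a..b, (B s *ᵥ (u s)⁻) i := by
          refine intervalIntegral.integral_mono_ae_restrict hab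
            (h.intervalIntegrable_mulVec hab hB i).neg
            (intervalIntegrable_mulVec_apply hB hneg i) ?_
          filter_upwards [hB₀] with s hs
          simpa only [mulVec_neg] using! mulVec_mono_of_nonneg hs (neg_le_negPart (u s)) i
  · filter_upwards [hB₀] with s hs
    simpa only [mulVec_zero] using! mulVec_mono_of_nonneg hs (negPart_nonneg (u s)) i

theorem sum_negPart_le_integral (h : IsCaratheodorySolution B u₀ a b u) (hab : a ≤ b)
    (hB : ∀ i j, IntervalIntegrable (fun t => B t i j) volume a b)
    (hB₀ : ∀ᵐ t ∂volume.restrict (Set.Icc a b), ∀ i j, 0 ≤ B t i j) (hu₀ : 0 ≤ u₀) :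
    ∑ i, (u b)⁻ i ≤ ∫ s in a..b, (∑ i, ⨆ k, B s i k) * ∑ i, (u s)⁻ i := by
  have hneg : ContinuousOn (fun t => (u t)⁻) (Set.uIcc a b) := by
    rw [Set.uIcc_of_le hab]
    exact h.continuousOn_negPart
  have hint (i : n) : IntervalIntegrable (fun s => (B s *ᵥ (u s)⁻) i) volume a b :=
    intervalIntegrable_mulVec_apply hB hneg i
  calc ∑ i, (u b)⁻ i
      ≤ ∑ i, ∫ s in a..b, (B s *ᵥ (u s)⁻) i :=
        Finset.sum_le_sum fun i _ => h.negPart_apply_le_integral hab hB hB₀ hu₀ i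
    _ = ∫ s in a..b, ∑ i, (B s *ᵥ (u s)⁻) i :=
        (intervalIntegral.integral_finsetSum fun i _ => hint i).symm
    _ ≤ ∫ s in a..b, (∑ i, ⨆ k, B s i k) * ∑ i, (u s)⁻ i :=
        intervalIntegral.integral_mono_on hab (intervalIntegrable_finsetSum fun i _ => hint i)
          ((intervalIntegrable_finsetSum fun i _ =>
              intervalIntegrable_ciSup (hB i)).mul_continuousOn
            (continuousOn_finsetSum _ fun i _ => continuousOn_pi.1 hneg i))
          fun s _ => sum_mulVec_le_sum_iSup_mul_sum (B s) (negPart_nonneg (u s))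

theorem nonneg_of_nonneg_entries (h : IsCaratheodorySolution B u₀ a b u)
    (hB : ∀ i j, IntervalIntegrable (fun t => B t i j) volume a b)
    (hB₀ : ∀ᵐ t ∂volume.restrict (Set.Icc a b), ∀ i j, 0 ≤ B t i j) (hu₀ : 0 ≤ u₀)
    {t : ℝ} (ht : t ∈ Set.Icc a b) : 0 ≤ u t := by
  have hsum_le : ∑ i, (u t)⁻ i ≤ 0 := by
    refine nonpos_of_le_integral_mul (α := fun s => ∑ i, ⨆ k, B s i k)
      (x := fun s => ∑ i, (u s)⁻ i) ht.1
      (intervalIntegrable_of_mem_Icc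
        (intervalIntegrable_finsetSum fun i _ => intervalIntegrable_ciSup (hB i)) ht) ?_
      (continuousOn_finsetSum _ fun i _ =>
        continuousOn_pi.1 (h.mono_right ht.2).continuousOn_negPart i) fun s hs => ?_
    · filter_upwards [ae_restrict_of_ae_restrict_of_subset (Set.Icc_subset_Icc_right ht.2) hB₀]
        with s hs
      exact Finset.sum_nonneg fun i _ => Real.iSup_nonneg (hs i)
    · have hs' := Set.Icc_subset_Icc_right ht.2 hs
      exact (h.mono_right hs'.2).sum_negPart_le_integral hs.1
        (fun i j => intervalIntegrable_of_mem_Icc (hB i j) hs')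
        (ae_restrict_of_ae_restrict_of_subset (Set.Icc_subset_Icc_right hs'.2) hB₀) hu₀
  have hsum_eq : ∑ i, (u t)⁻ i = 0 :=
    hsum_le.antisymm (Finset.sum_nonneg fun i _ => negPart_nonneg (u t) i)
  refine negPart_eq_zero.1 (funext fun i => ?_)
  exact (Finset.sum_eq_zero_iff_of_nonneg fun i _ => negPart_nonneg (u t) i).1 hsum_eq i
    (Finset.mem_univ i)

theorem add_integral_mul_apply_le (h : IsCaratheodorySolution B u₀ a b u) (hab : a ≤ b)
    (hB : ∀ i j, IntervalIntegrable (fun t => B t i j) volume a b)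
    (hB₀ : ∀ᵐ t ∂volume.restrict (Set.Icc a b), ∀ i j, 0 ≤ B t i j) (hu₀ : 0 ≤ u₀) (i j : n) :
    u₀ i + ∫ s in a..b, B s i j * u s j ≤ u b i := by
  rw [h.eq_add_integral b (Set.right_mem_Icc.2 hab)]
  gcongr
  refine intervalIntegral.integral_mono_ae_restrict hab ((hB i j).mul_continuousOn ?_)
    (h.intervalIntegrable_mulVec hab hB i) ?_
  · rw [Set.uIcc_of_le hab]
    exact continuousOn_pi.1 h.continuousOn j
  · filter_upwards [hB₀, ae_restrict_mem measurableSet_Icc] with s hBs hs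
    exact mul_apply_le_mulVec_of_nonneg hBs (h.nonneg_of_nonneg_entries hB hB₀ hu₀ hs) i j

theorem le_apply_of_nonneg_entries (h : IsCaratheodorySolution B u₀ a b u) (hab : a ≤ b)
    (hB : ∀ i j, IntervalIntegrable (fun t => B t i j) volume a b)
    (hB₀ : ∀ᵐ t ∂volume.restrict (Set.Icc a b), ∀ i j, 0 ≤ B t i j) (hu₀ : 0 ≤ u₀) :
    u₀ ≤ u b := by
  intro i
  refine le_trans (le_add_of_nonneg_right ?_) (h.add_integral_mul_apply_le hab hB hB₀ hu₀ i i)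
  refine intervalIntegral.integral_nonneg_of_ae_restrict hab ?_
  filter_upwards [hB₀, ae_restrict_mem measurableSet_Icc] with s hBs hs
  exact mul_nonneg (hBs i i) (h.nonneg_of_nonneg_entries hB hB₀ hu₀ hs i)

end IsCaratheodorySolution

theorem removeDiagonal_mulVec_apply [DecidableEq n] (t : ℝ) (x : n → ℝ) (i : n) :
    (removeDiagonal B a t *ᵥ fun j => x j * Real.exp (-∫ s in a..t, B s j j)) i =
      ((B t *ᵥ x) i - B t i i * x i) * Real.exp (-∫ s in a..t, B s i i) := by
  have hdiag : B t i i * x i = ∑ j, if i = j then B t i j * x j else 0 := by simp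
  rw [hdiag]
  simp only [mulVec, dotProduct, ← Finset.sum_sub_distrib, Finset.sum_mul]
  refine Finset.sum_congr rfl fun j _ => ?_
  by_cases hij : i = j
  · simp [removeDiagonal, hij]
  · simp only [removeDiagonal, of_apply, if_neg hij, Real.exp_neg]
    field_simp
    ring

namespace IsCaratheodorySolution

theorem mul_exp_neg_integral [DecidableEq n] (h : IsCaratheodorySolution B u₀ a b u)
    (hB : ∀ i j, IntervalIntegrable (fun t => B t i j) volume a b) :
    IsCaratheodorySolution (removeDiagonal B a) u₀ a b
      (fun t i => u t i * Real.exp (-∫ s in a..t, B s i i)) where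
  continuousOn := continuousOn_pi.2 fun i => (continuousOn_pi.1 h.continuousOn i).mul
    ((continuousOn_exp_neg_integral (hB i i)).mono Set.Icc_subset_uIcc)
  eq_add_integral t ht i := by
    have hBt (i j : n) := intervalIntegrable_of_mem_Icc (hB i j) ht
    have ht' := h.mono_right ht.2
    simp only [removeDiagonal_mulVec_apply]
    exact mul_exp_neg_integral_eq (ht'.intervalIntegrable_mulVec ht.1 hBt i) (hBt i i)
      (by rw [Set.uIcc_of_le ht.1]; exact fun s hs => ht'.eq_add_integral s hs i)

theorem nonneg (h : IsCaratheodorySolution B u₀ a b u)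
    (hB : ∀ i j, IntervalIntegrable (fun t => B t i j) volume a b)
    (hcoop : ∀ᵐ t ∂volume.restrict (Set.Icc a b), ∀ i j, i ≠ j → 0 ≤ B t i j) (hu₀ : 0 ≤ u₀)
    {t : ℝ} (ht : t ∈ Set.Icc a b) : 0 ≤ u t := by
  classical
  have hv := (h.mul_exp_neg_integral hB).nonneg_of_nonneg_entries
    (intervalIntegrable_removeDiagonal hB) (hcoop.mono fun t ht => removeDiagonal_nonneg ht) hu₀ ht
  exact fun i => nonneg_of_mul_nonneg_left (hv i) (Real.exp_pos _)

theorem exp_integral_mul_le (h : IsCaratheodorySolution B u₀ a b u) (hab : a ≤ b)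
    (hB : ∀ i j, IntervalIntegrable (fun t => B t i j) volume a b)
    (hcoop : ∀ᵐ t ∂volume.restrict (Set.Icc a b), ∀ i j, i ≠ j → 0 ≤ B t i j) (hu₀ : 0 ≤ u₀)
    (i : n) : Real.exp (∫ s in a..b, B s i i) * u₀ i ≤ u b i := by
  classical
  have hv : u₀ i ≤ u b i * Real.exp (-∫ s in a..b, B s i i) :=
    (h.mul_exp_neg_integral hB).le_apply_of_nonneg_entries hab
      (intervalIntegrable_removeDiagonal hB)
      (hcoop.mono fun t ht => removeDiagonal_nonneg ht) hu₀ i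
  rwa [Real.exp_neg, ← div_eq_mul_inv, le_div_iff₀' (Real.exp_pos _)] at hv

theorem exp_iInf_integral_mul_le (h : IsCaratheodorySolution B u₀ a b u)
    (hB : ∀ i j, IntervalIntegrable (fun t => B t i j) volume a b)
    (hcoop : ∀ᵐ t ∂volume.restrict (Set.Icc a b), ∀ i j, i ≠ j → 0 ≤ B t i j) (hu₀ : 0 ≤ u₀)
    (i : n) {t : ℝ} (ht : t ∈ Set.Icc a b) :
    Real.exp (⨅ t : Set.Icc a b, ∫ s in a..(t : ℝ), B s i i) * u₀ i ≤ u t i :=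
  calc Real.exp (⨅ t : Set.Icc a b, ∫ s in a..(t : ℝ), B s i i) * u₀ i
      ≤ Real.exp (∫ s in a..t, B s i i) * u₀ i := by
        gcongr
        exacts [hu₀ i, iInf_integral_left_le (hB i i) ht]
    _ ≤ u t i := (h.mono_right ht.2).exp_integral_mul_le ht.1
        (fun i j => intervalIntegrable_of_mem_Icc (hB i j) ht)
        (ae_restrict_of_ae_restrict_of_subset (Set.Icc_subset_Icc_right ht.2) hcoop) hu₀ i

theorem integral_exp_mul_mul_apply_le (h : IsCaratheodorySolution B u₀ a b u) (hab : a ≤ b)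
    (hB : ∀ i j, IntervalIntegrable (fun t => B t i j) volume a b)
    (hcoop : ∀ᵐ t ∂volume.restrict (Set.Icc a b), ∀ i j, i ≠ j → 0 ≤ B t i j) (hu₀ : 0 ≤ u₀)
    {i j : n} (hij : i ≠ j) :
    ∫ s in a..b, Real.exp (∫ τ in s..b, B τ i i) * (B s i j * u s j) ≤ u b i := by
  classical
  let β : ℝ → ℝ := fun t => ∫ s in a..t, B s i i
  have hv : u₀ i + ∫ s in a..b, removeDiagonal B a s i j *
      (u s j * Real.exp (-∫ r in a..s, B r j j)) ≤ u b i * Real.exp (-β b) :=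
    (h.mul_exp_neg_integral hB).add_integral_mul_apply_le hab (intervalIntegrable_removeDiagonal hB)
      (hcoop.mono fun t ht => removeDiagonal_nonneg ht) hu₀ i j
  have hentry (s : ℝ) : removeDiagonal B a s i j *
      (u s j * Real.exp (-∫ r in a..s, B r j j)) = Real.exp (-β s) * (B s i j * u s j) := by
    simp only [removeDiagonal, of_apply, if_neg hij, β, Real.exp_neg]
    field_simp
  simp only [hentry] at hv
  calc ∫ s in a..b, Real.exp (∫ τ in s..b, B τ i i) * (B s i j * u s j)
      = ∫ s in a..b, Real.exp (β b) * (Real.exp (-β s) * (B s i j * u s j)) := by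
        refine intervalIntegral.integral_congr fun s hs => ?_
        have hβ : β s + ∫ τ in s..b, B τ i i = β b :=
          intervalIntegral.integral_add_adjacent_intervals
            ((hB i i).mono_set (Set.uIcc_subset_uIcc_left hs))
            ((hB i i).mono_set (Set.uIcc_subset_uIcc_right hs))
        simp only [← mul_assoc, ← Real.exp_add, ← hβ]
        ring_nf
    _ = Real.exp (β b) * ∫ s in a..b, Real.exp (-β s) * (B s i j * u s j) :=
        intervalIntegral.integral_const_mul _ _
    _ ≤ Real.exp (β b) * (u b i * Real.exp (-β b)) := by
        gcongr
        exact (le_add_of_nonneg_left (hu₀ i)).trans hv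
    _ = u b i := by
        rw [mul_comm, mul_assoc, ← Real.exp_add, neg_add_cancel, Real.exp_zero, mul_one]

theorem exp_iInf_add_iInf_mul_integral_mul_le (h : IsCaratheodorySolution B u₀ a b u)
    (hab : a ≤ b) (hB : ∀ i j, IntervalIntegrable (fun t => B t i j) volume a b)
    (hcoop : ∀ᵐ t ∂volume.restrict (Set.Icc a b), ∀ i j, i ≠ j → 0 ≤ B t i j) (hu₀ : 0 ≤ u₀)
    {i j : n} (hij : i ≠ j) :
    Real.exp ((⨅ t : Set.Icc a b, ∫ s in a..(t : ℝ), B s j j) +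
        (⨅ t : Set.Icc a b, ∫ s in (t : ℝ)..b, B s i i)) *
      (∫ s in a..b, B s i j) * u₀ j ≤ u b i := by
  set l := ⨅ t : Set.Icc a b, ∫ s in a..(t : ℝ), B s j j
  set r := ⨅ t : Set.Icc a b, ∫ s in (t : ℝ)..b, B s i i
  calc Real.exp (l + r) * (∫ s in a..b, B s i j) * u₀ j
      = ∫ s in a..b, Real.exp r * (B s i j * (Real.exp l * u₀ j)) := by
        rw [intervalIntegral.integral_const_mul, intervalIntegral.integral_mul_const, Real.exp_add]
        ring
    _ ≤ ∫ s in a..b, Real.exp (∫ τ in s..b, B τ i i) * (B s i j * u s j) := by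
        refine intervalIntegral.integral_mono_ae_restrict hab
          (((hB i j).mul_const _).const_mul _) ?_ ?_
        · refine ((hB i j).mul_continuousOn ?_).continuousOn_mul
            (continuousOn_integral_left (hB i i)).rexp
          rw [Set.uIcc_of_le hab]
          exact continuousOn_pi.1 h.continuousOn j
        · filter_upwards [hcoop, ae_restrict_mem measurableSet_Icc] with s hBs hs
          have hBij : 0 ≤ B s i j := hBs i j hij
          have hu₀j : 0 ≤ u₀ j := hu₀ j
          gcongr
          exacts [iInf_integral_right_le (hB i i) hs, h.exp_iInf_integral_mul_le hB hcoop hu₀ j hs]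
    _ ≤ u b i := h.integral_exp_mul_mul_apply_le hab hB hcoop hu₀ hij

theorem sum_apply_le_sum_mul_exp_integral (h : IsCaratheodorySolution B u₀ a b u) (hab : a ≤ b)
    (hB : ∀ i j, IntervalIntegrable (fun t => B t i j) volume a b)
    (hcoop : ∀ᵐ t ∂volume.restrict (Set.Icc a b), ∀ i j, i ≠ j → 0 ≤ B t i j) (hu₀ : 0 ≤ u₀) :
    ∑ i, u b i ≤ (∑ i, u₀ i) * Real.exp (∫ s in a..b, ∑ i, ⨆ k, B s i k) := by
  refine le_mul_exp_integral_of_ae_le (x := fun t => ∑ i, u t i) hab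
    (intervalIntegrable_finsetSum fun i _ => h.intervalIntegrable_mulVec hab hB i)
    (intervalIntegrable_finsetSum fun i _ => intervalIntegrable_ciSup (hB i))
    (fun t ht => (h.mono_right ht.2).sum_eq_add_integral ht.1
      fun i j => intervalIntegrable_of_mem_Icc (hB i j) ht) ?_
  filter_upwards [ae_restrict_mem measurableSet_Icc] with s hs
  exact sum_mulVec_le_sum_iSup_mul_sum (B s) (h.nonneg hB hcoop hu₀ hs)

theorem apply_le_sum_mul_exp_integral (h : IsCaratheodorySolution B u₀ a b u) (hab : a ≤ b)
    (hB : ∀ i j, IntervalIntegrable (fun t => B t i j) volume a b)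
    (hcoop : ∀ᵐ t ∂volume.restrict (Set.Icc a b), ∀ i j, i ≠ j → 0 ≤ B t i j) (hu₀ : 0 ≤ u₀)
    (i : n) : u b i ≤ (∑ i, u₀ i) * Real.exp (∫ s in a..b, ∑ i, ⨆ k, B s i k) :=
  (Finset.single_le_sum (fun k _ => h.nonneg hB hcoop hu₀ (Set.right_mem_Icc.2 hab) k)
    (Finset.mem_univ i)).trans (h.sum_apply_le_sum_mul_exp_integral hab hB hcoop hu₀)

end IsCaratheodorySolution

end System

/-! ### The Euclidean operator norm dominates the entries -/

section EuclideanNorm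

variable {N : ℕ}

theorem enorm'_eq_norm_toLp (u : Fin N → ℝ) : enorm' u = ‖WithLp.toLp 2 u‖ := by
  simp only [enorm', EuclideanSpace.norm_eq, Real.norm_eq_abs, sq_abs]

theorem enorm'_mulVec_le_eopNorm (M : Matrix (Fin N) (Fin N) ℝ) {u : Fin N → ℝ}
    (hu : enorm' u ≤ 1) : enorm' (M *ᵥ u) ≤ eopNorm M := by
  refine le_csSup ⟨‖toEuclideanCLM (𝕜 := ℝ) M‖, ?_⟩ ⟨u, hu, rfl⟩
  rintro _ ⟨v, hv, rfl⟩
  rw [enorm'_eq_norm_toLp] at hv ⊢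
  rw [← toEuclideanCLM_toLp]
  exact ContinuousLinearMap.unit_le_opNorm _ _ hv

theorem abs_apply_le_eopNorm (M : Matrix (Fin N) (Fin N) ℝ) (i j : Fin N) :
    |M i j| ≤ eopNorm M := by
  have hcol : |M i j| ≤ enorm' (M *ᵥ Pi.single j 1) := by
    rw [enorm'_eq_norm_toLp, mulVec_single_one]
    exact PiLp.norm_apply_le (WithLp.toLp 2 (M.col j)) i
  exact hcol.trans (enorm'_mulVec_le_eopNorm M (by simp [enorm'_eq_norm_toLp]))

theorem intervalIntegrable_apply_of_eopNorm {B : ℝ → Matrix (Fin N) (Fin N) ℝ} {a b : ℝ}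
    {i j : Fin N} (hmeas : Measurable fun t => B t i j)
    (hB : IntervalIntegrable (fun t => eopNorm (B t)) volume a b) :
    IntervalIntegrable (fun t => B t i j) volume a b :=
  hB.mono_fun hmeas.aestronglyMeasurable (Eventually.of_forall fun t =>
    (abs_apply_le_eopNorm (B t) i j).trans (le_abs_self _))

end EuclideanNorm

/-! ### Bounds for the fundamental matrix -/

theorem stmt_14_general {n : Type*} [Fintype n] [DecidableEq n] {B U : ℝ → Matrix n n ℝ} {a b : ℝ}
    (hab : a ≤ b) (hB : ∀ i j, IntervalIntegrable (fun t => B t i j) volume a b)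
    (hcoop : ∀ᵐ t ∂volume.restrict (Set.Icc a b), ∀ i j, i ≠ j → 0 ≤ B t i j)
    (hU : ∀ i, IsCaratheodorySolution B (Pi.single i 1) a b fun t => U t *ᵥ Pi.single i 1) :
    (∀ i, Real.exp (⨅ t : Set.Icc a b, ∫ τ in a..(t : ℝ), B τ i i) ≤
      (U b *ᵥ Pi.single i 1) i) ∧
    (∀ i j, j ≠ i →
      Real.exp ((⨅ t : Set.Icc a b, ∫ τ in a..(t : ℝ), B τ i i) +
          (⨅ s : Set.Icc a b, ∫ τ in (s : ℝ)..b, B τ j j)) * ∫ τ in a..b, B τ j i ≤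
        (U b *ᵥ Pi.single i 1) j) ∧
    (∀ i j, (U b *ᵥ Pi.single i 1) j ≤ Real.exp (∫ τ in a..b, ∑ l, ⨆ k, B τ l k)) := by
  have hsingle (i : n) : (0 : n → ℝ) ≤ Pi.single i 1 := Pi.single_nonneg.2 zero_le_one
  refine ⟨fun i => ?_, fun i j hji => ?_, fun i j => ?_⟩
  · simpa only [Pi.single_eq_same, mul_one] using (hU i).exp_iInf_integral_mul_le hB hcoop
      (hsingle i) i (Set.right_mem_Icc.2 hab)
  · simpa only [Pi.single_eq_same, mul_one] using
      (hU i).exp_iInf_add_iInf_mul_integral_mul_le hab hB hcoop (hsingle i) hji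
  · simpa only [Finset.sum_pi_single', Finset.mem_univ, if_true, one_mul] using
      (hU i).apply_le_sum_mul_exp_integral hab hB hcoop (hsingle i) j

/-- Entrywise bounds on the time-one solution matrix of a random
cooperative linear ODE system with off-diagonal positivity. -/
theorem stmt_14 {N : ℕ} (hN : 2 ≤ N)
    {Ω : Type*} [MeasurableSpace Ω] (ℙ : Measure Ω) [IsProbabilityMeasure ℙ]
    [ℙ.IsComplete]
    (θ : ℝ → Ω → Ω) (hθ0 : θ 0 = id)
    (hθadd : ∀ s t : ℝ, θ (s + t) = θ s ∘ θ t)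
    (hθjm : Measurable fun p : ℝ × Ω => θ p.1 p.2)
    (hθmp : ∀ t, MeasurePreserving (θ t) ℙ ℙ)
    (hθerg : ∀ F : Set Ω, MeasurableSet F → (∀ t, θ t ⁻¹' F = F) →
      ℙ F = 0 ∨ ℙ F = 1)
    (A : Ω → Matrix (Fin N) (Fin N) ℝ)
    (hAmeas : ∀ i j, Measurable fun ω => A ω i j)
    (hAloc : ∀ ω, ∀ a c : ℝ,
      IntervalIntegrable (fun t => eopNorm (A (θ t ω))) volume a c)
    (U : Ω → ℝ → Matrix (Fin N) (Fin N) ℝ)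
    (hUcont : ∀ ω (u0 : Fin N → ℝ), Continuous fun t : ℝ => (U ω t).mulVec u0)
    (hUeq : ∀ ω (u0 : Fin N → ℝ) (t : ℝ),
      (U ω t).mulVec u0 = u0 + ∫ s in (0:ℝ)..t, (A (θ s ω)).mulVec ((U ω s).mulVec u0))
    (hO1 : ∀ ω (i j : Fin N), i ≠ j → 0 ≤ A ω i j)
    (δ : Ω → ℝ) (hδmeas : Measurable δ) (hδpos : ∀ ω, 0 < δ ω)
    (hδ : ∀ ω (i j : Fin N), i ≠ j →
      ∀ᵐ t ∂(volume.restrict (Set.Icc (0:ℝ) 1)), δ ω ≤ A (θ t ω) i j) :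
    -- (i)
    (∀ ω (i : Fin N),
      Real.exp (⨅ t : Set.Icc (0:ℝ) 1, ∫ τ in (0:ℝ)..(t : ℝ), A (θ τ ω) i i) ≤
        (U ω 1).mulVec (Pi.single i 1) i) ∧
    -- (ii)
    (∀ ω (i j : Fin N), j ≠ i →
      Real.exp ((⨅ t : Set.Icc (0:ℝ) 1, ∫ τ in (0:ℝ)..(t : ℝ), A (θ τ ω) i i) +
          (⨅ s : Set.Icc (0:ℝ) 1, ∫ τ in (s : ℝ)..(1:ℝ), A (θ τ ω) j j)) * δ ω ≤
        (U ω 1).mulVec (Pi.single i 1) j) ∧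
    -- (iii)
    (∀ ω (i j : Fin N),
      (U ω 1).mulVec (Pi.single i 1) j ≤
        Real.exp (∫ τ in (0:ℝ)..(1:ℝ), ∑ l, ⨆ k, A (θ τ ω) l k)) := by
  have hA ω a c i j : IntervalIntegrable (fun t => A (θ t ω) i j) volume a c :=
    intervalIntegrable_apply_of_eopNorm
      ((hAmeas i j).comp (hθjm.comp measurable_prodMk_right)) (hAloc ω a c)
  have hbounds ω := stmt_14_general (B := fun t => A (θ t ω)) (U := U ω) zero_le_one
    (hA ω 0 1) (ae_of_all _ fun t => hO1 (θ t ω))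
    fun i => isCaratheodorySolution_of_eq_add_integral (hA ω 0 1) (hUcont ω _).continuousOn
      fun t _ => hUeq ω _ t
  have hδ_le ω i j (hji : j ≠ i) : δ ω ≤ ∫ t in (0 : ℝ)..1, A (θ t ω) j i := by
    simpa using intervalIntegral.integral_mono_ae_restrict zero_le_one
      (intervalIntegrable_const (c := δ ω)) (hA ω 0 1 j i) (hδ ω j i hji)
  refine ⟨fun ω => (hbounds ω).1, fun ω i j hji => ?_, fun ω => (hbounds ω).2.2⟩
  exact (mul_le_mul_of_nonneg_left (hδ_le ω i j hji) (Real.exp_pos _).le).trans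
    ((hbounds ω).2.1 i j hji)
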